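/- arXiv:2111.11494 — 2 statements merged into one kernel-verified Lean document; each statement's English description precedes it below -/
import Mathlib

section
/- Let m, n be positive integers, ε = 1 or −1, and let w be a real-analytic solution of x^m w_yy + ε y^n w_xx = 0 on a square |x| < R, |y| < R, with expansion w(x,y) = Σ_{j=0}^∞ α_j(x) y^j. Then α_k ≡ 0 on (−R, R) for every index k ≥ 2 such that neither k nor k−1 is a nonnegative integer multiple of n+2. -/
noncomputable section

/-- Dot product of two 3-vectors (ℂ-bilinear extension when over ℂ). -/
def dot3 {R : Type*} [CommRing R] (v w : Fin 3 → R) : R :=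
  v 0 * w 0 + v 1 * w 1 + v 2 * w 2

/-- Cross product of two 3-vectors (ℂ-bilinear extension when over ℂ). -/
def cross3 {R : Type*} [CommRing R] (v w : Fin 3 → R) : Fin 3 → R :=
  ![v 1 * w 2 - v 2 * w 1, v 2 * w 0 - v 0 * w 2, v 0 * w 1 - v 1 * w 0]

/-- Euclidean norm of a real 3-vector. -/
def enorm3 (v : Fin 3 → ℝ) : ℝ := Real.sqrt (dot3 v v)

/-- Partial derivative with respect to the first variable `s`. -/
def pds {E : Type*} [NormedAddCommGroup E] [NormedSpace ℝ E]
    (f : ℝ × ℝ → E) (p : ℝ × ℝ) : E :=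
  deriv (fun s => f (s, p.2)) p.1

/-- Partial derivative with respect to the second variable `t`. -/
def pdt {E : Type*} [NormedAddCommGroup E] [NormedSpace ℝ E]
    (f : ℝ × ℝ → E) (p : ℝ × ℝ) : E :=
  deriv (fun t => f (p.1, t)) p.2

/-- Componentwise `s`-derivative of a 3-vector valued map. -/
def vds (V : ℝ × ℝ → Fin 3 → ℝ) (p : ℝ × ℝ) : Fin 3 → ℝ := fun i => pds (fun q => V q i) p

/-- Componentwise `t`-derivative of a 3-vector valued map. -/
def vdt (V : ℝ × ℝ → Fin 3 → ℝ) (p : ℝ × ℝ) : Fin 3 → ℝ := fun i => pdt (fun q => V q i) p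

open Filter Topology

lemma aux_pds_eq {f : ℝ × ℝ → ℝ} {p : ℝ × ℝ} (h : DifferentiableAt ℝ f p) :
    pds f p = fderiv ℝ f p (1, 0) := by
  have h1 : HasDerivAt (fun s : ℝ => (s, p.2)) ((1 : ℝ), (0 : ℝ)) p.1 :=
    (hasDerivAt_id p.1).prodMk (hasDerivAt_const p.1 p.2)
  have h2 : HasFDerivAt f (fderiv ℝ f p) (p.1, p.2) := h.hasFDerivAt
  exact (h2.comp_hasDerivAt p.1 h1).deriv

lemma aux_pdt_eq {f : ℝ × ℝ → ℝ} {p : ℝ × ℝ} (h : DifferentiableAt ℝ f p) :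
    pdt f p = fderiv ℝ f p (0, 1) := by
  have h1 : HasDerivAt (fun s : ℝ => (p.1, s)) ((0 : ℝ), (1 : ℝ)) p.2 :=
    (hasDerivAt_const p.2 p.1).prodMk (hasDerivAt_id p.2)
  have h2 : HasFDerivAt f (fderiv ℝ f p) (p.1, p.2) := h.hasFDerivAt
  exact (h2.comp_hasDerivAt p.2 h1).deriv

lemma aux_pds_ev {f : ℝ × ℝ → ℝ} {p : ℝ × ℝ} (h : AnalyticAt ℝ f p) :
    pds f =ᶠ[𝓝 p] fun q => fderiv ℝ f q (1, 0) := by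
  filter_upwards [h.eventually_analyticAt] with q hq
  exact aux_pds_eq hq.differentiableAt

lemma aux_pdt_ev {f : ℝ × ℝ → ℝ} {p : ℝ × ℝ} (h : AnalyticAt ℝ f p) :
    pdt f =ᶠ[𝓝 p] fun q => fderiv ℝ f q (0, 1) := by
  filter_upwards [h.eventually_analyticAt] with q hq
  exact aux_pdt_eq hq.differentiableAt

lemma aux_fd_an {f : ℝ × ℝ → ℝ} {p : ℝ × ℝ} (h : AnalyticAt ℝ f p) (v : ℝ × ℝ) :
    AnalyticAt ℝ (fun q => fderiv ℝ f q v) p :=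
  ((ContinuousLinearMap.apply ℝ ℝ v).analyticAt _).comp h.fderiv

lemma aux_pds_an {f : ℝ × ℝ → ℝ} {p : ℝ × ℝ} (h : AnalyticAt ℝ f p) :
    AnalyticAt ℝ (pds f) p :=
  (aux_fd_an h _).congr (aux_pds_ev h).symm

lemma aux_pdt_an {f : ℝ × ℝ → ℝ} {p : ℝ × ℝ} (h : AnalyticAt ℝ f p) :
    AnalyticAt ℝ (pdt f) p :=
  (aux_fd_an h _).congr (aux_pdt_ev h).symm

lemma aux_pds_congr {f g : ℝ × ℝ → ℝ} {p : ℝ × ℝ} (h : f =ᶠ[𝓝 p] g) :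
    pds f =ᶠ[𝓝 p] pds g := by
  filter_upwards [h.eventuallyEq_nhds] with q hq
  apply EventuallyEq.deriv_eq
  have hc : ContinuousAt (fun s : ℝ => (s, q.2)) q.1 := by fun_prop
  exact hc.eventually hq

lemma aux_pdt_congr {f g : ℝ × ℝ → ℝ} {p : ℝ × ℝ} (h : f =ᶠ[𝓝 p] g) :
    pdt f =ᶠ[𝓝 p] pdt g := by
  filter_upwards [h.eventuallyEq_nhds] with q hq
  apply EventuallyEq.deriv_eq
  have hc : ContinuousAt (fun s : ℝ => (q.1, s)) q.2 := by fun_prop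
  exact hc.eventually hq

lemma aux_comm {f : ℝ × ℝ → ℝ} {p : ℝ × ℝ} (h : AnalyticAt ℝ f p) :
    pdt (pds f) p = pds (pdt f) p := by
  have hd : DifferentiableAt ℝ (fderiv ℝ f) p := h.fderiv.differentiableAt
  rw [(aux_pdt_congr (aux_pds_ev h)).eq_of_nhds, (aux_pds_congr (aux_pdt_ev h)).eq_of_nhds,
    aux_pdt_eq (aux_fd_an h _).differentiableAt, aux_pds_eq (aux_fd_an h _).differentiableAt,
    fderiv_clm_apply hd (by fun_prop), fderiv_clm_apply hd (by fun_prop)]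
  have := (h.contDiffAt (n := 2)).isSymmSndFDerivAt (by simp)
  simpa using this.eq (0, 1) (1, 0)

lemma aux_comm_ev {f : ℝ × ℝ → ℝ} {p : ℝ × ℝ} (h : AnalyticAt ℝ f p) :
    pdt (pds f) =ᶠ[𝓝 p] pds (pdt f) := by
  filter_upwards [h.eventually_analyticAt] with q hq
  exact aux_comm hq

lemma aux_iter_an {f : ℝ × ℝ → ℝ} {p : ℝ × ℝ} (h : AnalyticAt ℝ f p) (j : ℕ) :
    AnalyticAt ℝ (pdt^[j] f) p := by
  induction j with
  | zero => exact h
  | succ j ih => rw [Function.iterate_succ_apply']; exact aux_pdt_an ih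

lemma aux_iter_comm {f : ℝ × ℝ → ℝ} {p : ℝ × ℝ} (h : AnalyticAt ℝ f p) (j : ℕ) :
    pdt^[j] (pds f) =ᶠ[𝓝 p] pds (pdt^[j] f) := by
  induction j with
  | zero => exact EventuallyEq.rfl
  | succ j ih =>
    rw [Function.iterate_succ_apply', Function.iterate_succ_apply']
    exact (aux_pdt_congr ih).trans (aux_comm_ev (aux_iter_an h j))

lemma aux_iter_deriv (f : ℝ × ℝ → ℝ) (x : ℝ) (j : ℕ) :
    iteratedDeriv j (fun t => f (x, t)) = fun t => (pdt^[j] f) (x, t) := by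
  induction j with
  | zero => simp
  | succ j ih =>
    rw [iteratedDeriv_succ, ih, Function.iterate_succ_apply']
    rfl

lemma aux_coeff {g : ℝ → ℝ} {a : ℕ → ℝ} {R : ℝ} (hR : 0 < R) (hg : AnalyticAt ℝ g 0)
    (h : ∀ y, |y| < R → HasSum (fun j => a j * y ^ j) (g y)) (j : ℕ) :
    iteratedDeriv j g 0 = j.factorial * a j := by
  have h1 : HasFPowerSeriesAt g (FormalMultilinearSeries.ofScalars ℝ a) 0 := by
    rw [hasFPowerSeriesAt_iff]
    have : ∀ᶠ z : ℝ in 𝓝 0, |z| < R := by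
      have hc : ContinuousAt (fun z : ℝ => |z|) 0 := by fun_prop
      exact hc.eventually_lt continuousAt_const (by simpa using hR)
    filter_upwards [this] with z hz
    simpa [FormalMultilinearSeries.coeff_ofScalars, mul_comm] using h z hz
  have h2 := h1.eq_formalMultilinearSeries hg.hasFPowerSeriesAt
  have h3 := congrArg (fun p => FormalMultilinearSeries.coeff p j) h2
  simp only [FormalMultilinearSeries.coeff_ofScalars] at h3
  rw [h3]
  field_simp

lemma aux_pow_mul {h : ℝ → ℝ} (hh : AnalyticAt ℝ h 0) (n k : ℕ)
    (hk : ∀ j, k = n + j → iteratedDeriv j h 0 = 0) :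
    iteratedDeriv k (fun y => y ^ n * h y) 0 = 0 := by
  rw [iteratedDeriv_fun_mul (by fun_prop) hh.contDiffAt]
  apply Finset.sum_eq_zero
  intro i hi
  rw [iteratedDeriv_fun_pow_zero]
  by_cases hin : i = n
  · rw [hk (k - i) (by have := Finset.mem_range.1 hi; omega)]; simp
  · simp [hin]

/-- For an analytic solution `w = Σ_j α_j(x) y^j` of
`x^m w_yy + ε y^n w_xx = 0` on the square, `α_k ≡ 0` whenever `k ≥ 2` and neither `k` nor
`k − 1` is a nonnegative-integer multiple of `n+2`. -/
theorem coefficient_vanishing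
    (m n : ℕ) (hm : 0 < m) (hn : 0 < n) (ε : ℝ) (hε : ε = 1 ∨ ε = -1)
    (R : ℝ) (hR : 0 < R)
    (w : ℝ × ℝ → ℝ)
    (hw : AnalyticOnNhd ℝ w (Set.Ioo (-R) R ×ˢ Set.Ioo (-R) R))
    (hsol : ∀ p : ℝ × ℝ, |p.1| < R → |p.2| < R →
      p.1 ^ m * pdt (pdt w) p + ε * p.2 ^ n * pds (pds w) p = 0)
    (α : ℕ → ℝ → ℝ) (hα : ∀ j, AnalyticOnNhd ℝ (α j) (Set.Ioo (-R) R))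
    (hexp : ∀ x y : ℝ, |x| < R → |y| < R → HasSum (fun j => α j x * y ^ j) (w (x, y)))
    :
    ∀ k : ℕ, 2 ≤ k → ¬ (∃ q : ℕ, k = q * (n + 2)) → ¬ (∃ q : ℕ, k - 1 = q * (n + 2)) →
      ∀ x : ℝ, |x| < R → α k x = 0 := by
  have hin : ∀ {x y : ℝ}, |x| < R → |y| < R → AnalyticAt ℝ w (x, y) := fun hx hy =>
    hw _ ⟨abs_lt.1 hx, abs_lt.1 hy⟩
  have h0 : |(0 : ℝ)| < R := by simpa using hR
  have hslice : ∀ {f : ℝ × ℝ → ℝ} {x y : ℝ}, AnalyticAt ℝ f (x, y) →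
      AnalyticAt ℝ (fun t => f (x, t)) y := fun {f x y} hf =>
    AnalyticAt.comp₂ (f := fun _ => x) (g := fun t => t) (h := f) hf analyticAt_const analyticAt_id
  have hcoef : ∀ x, |x| < R → ∀ j, (pdt^[j] w) (x, 0) = j.factorial * α j x := by
    intro x hx j
    rw [← aux_coeff hR (hslice (hin hx h0)) (fun y hy => hexp x y hx hy) j, aux_iter_deriv]
  have hopen : ∀ x, |x| < R → ∀ᶠ s in 𝓝 x, |s| < R := fun x hx =>
    continuous_abs.continuousAt.eventually_lt continuousAt_const hx
  -- main step
  have step : ∀ k, (∀ j, k = n + j → ∀ x, |x| < R → α j x = 0) →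
      ∀ x, |x| < R → α (k + 2) x = 0 := by
    intro k hk
    have hne : ∀ x, |x| < R → x ≠ 0 → α (k + 2) x = 0 := by
      intro x hx hx0
      have hA : AnalyticAt ℝ (pds (pds w)) (x, 0) := aux_pds_an (aux_pds_an (hin hx h0))
      have hB : AnalyticAt ℝ (pdt (pdt w)) (x, 0) := aux_pdt_an (aux_pdt_an (hin hx h0))
      have hz : iteratedDeriv k (fun y => y ^ n * pds (pds w) (x, y)) 0 = 0 := by
        apply aux_pow_mul (hslice hA)
        intro j hj
        rw [aux_iter_deriv]
        have e1 : pdt^[j] (pds (pds w)) =ᶠ[𝓝 (x, 0)] pds (pds (pdt^[j] w)) :=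
          (aux_iter_comm (aux_pds_an (hin hx h0)) j).trans
            (aux_pds_congr (aux_iter_comm (hin hx h0) j))
        show (pdt^[j] (pds (pds w))) (x, 0) = 0
        rw [e1.eq_of_nhds]
        have e2 : ∀ s, |s| < R → pds (pdt^[j] w) (s, 0) = 0 := by
          intro s hs
          have : (fun r => (pdt^[j] w) (r, 0)) =ᶠ[𝓝 s] fun _ => (0 : ℝ) := by
            filter_upwards [hopen s hs] with r hr
            rw [hcoef r hr j, hk j hj r hr, mul_zero]
          show deriv (fun r => (pdt^[j] w) (r, 0)) s = 0
          rw [this.deriv_eq, deriv_const]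
        have : (fun r => pds (pdt^[j] w) (r, 0)) =ᶠ[𝓝 x] fun _ => (0 : ℝ) := by
          filter_upwards [hopen x hx] with r hr
          exact e2 r hr
        show deriv (fun r => pds (pdt^[j] w) (r, 0)) x = 0
        rw [this.deriv_eq, deriv_const]
      have heq : (fun y => pdt (pdt w) (x, y)) =ᶠ[𝓝 0]
          fun y => (-ε / x ^ m) * (y ^ n * pds (pds w) (x, y)) := by
        filter_upwards [hopen 0 h0] with y hy
        have := hsol (x, y) hx hy
        simp only at this
        have hxm : x ^ m ≠ 0 := pow_ne_zero _ hx0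
        field_simp
        linarith
      have hd := heq.iteratedDeriv_eq k
      rw [iteratedDeriv_const_mul_field, hz, mul_zero, aux_iter_deriv] at hd
      have hd' : (pdt^[k + 2] w) (x, 0) = 0 := hd
      rw [hcoef x hx] at hd'
      exact (mul_eq_zero.1 hd').resolve_left (by positivity)
    intro x hx
    by_cases hx0 : x = 0
    · subst hx0
      have hc : ContinuousAt (α (k + 2)) 0 := (hα (k + 2) 0 (abs_lt.1 hx)).continuousAt
      have t1 : Tendsto (α (k + 2)) (𝓝[≠] 0) (𝓝 (α (k + 2) 0)) :=
        hc.tendsto.mono_left nhdsWithin_le_nhds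
      have t2 : Tendsto (α (k + 2)) (𝓝[≠] 0) (𝓝 0) := by
        refine (tendsto_const_nhds (x := (0 : ℝ))).congr' ?_
        filter_upwards [self_mem_nhdsWithin, nhdsWithin_le_nhds (hopen 0 hx)] with s hs hs'
        exact (hne s hs' hs).symm
      exact tendsto_nhds_unique t1 t2
    · exact hne x hx hx0
  intro k
  induction k using Nat.strong_induction_on with
  | _ k ih =>
    intro hk2 hq hq1
    obtain ⟨k, rfl⟩ := Nat.exists_eq_add_of_le' hk2
    apply step k
    intro j hj
    have hj0 : j ≠ 0 := fun h => hq ⟨1, by omega⟩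
    have hj1 : j ≠ 1 := fun h => hq1 ⟨1, by omega⟩
    apply ih j (by omega) (by omega)
    · rintro ⟨q, h⟩
      exact hq ⟨q + 1, by rw [add_mul]; omega⟩
    · rintro ⟨q, h⟩
      exact hq1 ⟨q + 1, by rw [add_mul]; omega⟩
end
end

section
/- Let m, n be positive integers, ε = 1 or −1, and let w be a real-analytic solution of x^m w_yy + ε y^n w_xx = 0 on a square |x| < R, |y| < R, with expansion w(x,y) = Σ_{j=0}^∞ α_j(x) y^j. Then for every integer p ≥ 0 and every x with 0 < |x| < R: α_{p(n+2)}(x) = ((−ε)^p / A^n_p) (D^p α_0)(x) and α_{p(n+2)+1}(x) = ((−ε)^p / B^n_p) (D^p α_1)(x), where D is the operator (Df)(x) = x^{−m} f''(x), D^p is its p-th iterate, A^n_p = ∏_{k=1}^p [k(n+2)−1][k(n+2)], and B^n_p = ∏_{k=1}^p [k(n+2)][k(n+2)+1] (with A^n_0 = B^n_0 = 1). -/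
open scoped BigOperators

noncomputable section

/-- `A_β^α = ∏_{k=1}^β [k(α+2)−1][k(α+2)]`, with `A_0^α = 1`. -/
def Acoef (α β : ℕ) : ℕ := ∏ k ∈ Finset.Icc 1 β, ((k * (α + 2) - 1) * (k * (α + 2)))

/-- `B_β^α = ∏_{k=1}^β [k(α+2)][k(α+2)+1]`, with `B_0^α = 1`. -/
def Bcoef (α β : ℕ) : ℕ := ∏ k ∈ Finset.Icc 1 β, ((k * (α + 2)) * (k * (α + 2) + 1))

/-- The operator `D f (x) = f''(x) / x^m`, defined for `x ≠ 0`. -/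
def DopR (m : ℕ) (f : ℝ → ℝ) : ℝ → ℝ := fun x => deriv (deriv f) x / x ^ m

open Filter Topology in
theorem pds_congr_on {U : Set (ℝ × ℝ)} (hU : IsOpen U) {f g : ℝ × ℝ → ℝ} (h : Set.EqOn f g U) :
    Set.EqOn (pds f) (pds g) U := by
  intro p hp
  unfold pds
  apply Filter.EventuallyEq.deriv_eq
  have hc : Continuous (fun s : ℝ => (s, p.2)) := by fun_prop
  have : (fun s : ℝ => (s, p.2)) ⁻¹' U ∈ 𝓝 p.1 := (hU.preimage hc).mem_nhds hp
  filter_upwards [this] with s hs using h hs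

open Filter Topology in
theorem pdt_congr_on {U : Set (ℝ × ℝ)} (hU : IsOpen U) {f g : ℝ × ℝ → ℝ} (h : Set.EqOn f g U) :
    Set.EqOn (pdt f) (pdt g) U := by
  intro p hp
  unfold pdt
  apply Filter.EventuallyEq.deriv_eq
  have hc : Continuous (fun s : ℝ => (p.1, s)) := by fun_prop
  have : (fun s : ℝ => (p.1, s)) ⁻¹' U ∈ 𝓝 p.2 := (hU.preimage hc).mem_nhds hp
  filter_upwards [this] with s hs using h hs

theorem pdt_iter_congr_on {U : Set (ℝ × ℝ)} (hU : IsOpen U) (j : ℕ) {f g : ℝ × ℝ → ℝ}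
    (h : Set.EqOn f g U) : Set.EqOn (pdt^[j] f) (pdt^[j] g) U := by
  induction j generalizing f g with
  | zero => exact h
  | succ j ih => exact ih (pdt_congr_on hU h)

theorem pds_eq_fderiv {f : ℝ × ℝ → ℝ} {p : ℝ × ℝ} (h : AnalyticAt ℝ f p) :
    pds f p = fderiv ℝ f p (1, 0) := by
  have h1 : HasDerivAt (fun s : ℝ => (s, p.2)) ((1, 0) : ℝ × ℝ) p.1 :=
    (hasDerivAt_id p.1).prodMk (hasDerivAt_const p.1 p.2)
  have h2 : HasFDerivAt f (fderiv ℝ f p) ((fun s : ℝ => (s, p.2)) p.1) :=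
    h.differentiableAt.hasFDerivAt
  exact (h2.comp_hasDerivAt p.1 h1).deriv

theorem pdt_eq_fderiv {f : ℝ × ℝ → ℝ} {p : ℝ × ℝ} (h : AnalyticAt ℝ f p) :
    pdt f p = fderiv ℝ f p (0, 1) := by
  have h1 : HasDerivAt (fun s : ℝ => (p.1, s)) ((0, 1) : ℝ × ℝ) p.2 :=
    (hasDerivAt_const p.2 p.1).prodMk (hasDerivAt_id p.2)
  have h2 : HasFDerivAt f (fderiv ℝ f p) ((fun s : ℝ => (p.1, s)) p.2) :=
    h.differentiableAt.hasFDerivAt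
  exact (h2.comp_hasDerivAt p.2 h1).deriv

theorem analytic_dir {U : Set (ℝ × ℝ)} {f : ℝ × ℝ → ℝ} (h : AnalyticOnNhd ℝ f U) (v : ℝ × ℝ) :
    AnalyticOnNhd ℝ (fun p => fderiv ℝ f p v) U := by
  intro p hp
  exact ((ContinuousLinearMap.apply ℝ ℝ v).analyticAt _).comp (h p hp).fderiv

theorem pds_analytic {U : Set (ℝ × ℝ)} (hU : IsOpen U) {f : ℝ × ℝ → ℝ}
    (h : AnalyticOnNhd ℝ f U) : AnalyticOnNhd ℝ (pds f) U :=
  (analytic_dir h (1, 0)).congr hU (fun p hp => (pds_eq_fderiv (h p hp)).symm)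

theorem pdt_analytic {U : Set (ℝ × ℝ)} (hU : IsOpen U) {f : ℝ × ℝ → ℝ}
    (h : AnalyticOnNhd ℝ f U) : AnalyticOnNhd ℝ (pdt f) U :=
  (analytic_dir h (0, 1)).congr hU (fun p hp => (pdt_eq_fderiv (h p hp)).symm)

theorem fderiv_dir {f : ℝ × ℝ → ℝ} {p : ℝ × ℝ} (h : AnalyticAt ℝ f p) (u v : ℝ × ℝ) :
    fderiv ℝ (fun q => fderiv ℝ f q v) p u = fderiv ℝ (fderiv ℝ f) p u v := by
  have h1 := h.fderiv.differentiableAt.hasFDerivAt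
  have h2 := ((ContinuousLinearMap.apply ℝ ℝ v).hasFDerivAt (x := fderiv ℝ f p)).comp p h1
  have h3 : fderiv ℝ (fun q => fderiv ℝ f q v) p = _ := h2.fderiv
  rw [h3]; rfl

theorem pdt_pds_comm {U : Set (ℝ × ℝ)} (hU : IsOpen U) {f : ℝ × ℝ → ℝ}
    (h : AnalyticOnNhd ℝ f U) : Set.EqOn (pdt (pds f)) (pds (pdt f)) U := by
  intro p hp
  have e1 : Set.EqOn (pds f) (fun q => fderiv ℝ f q (1, 0)) U := fun q hq => pds_eq_fderiv (h q hq)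
  have e2 : Set.EqOn (pdt f) (fun q => fderiv ℝ f q (0, 1)) U := fun q hq => pdt_eq_fderiv (h q hq)
  rw [pdt_congr_on hU e1 hp, pds_congr_on hU e2 hp,
    pdt_eq_fderiv (analytic_dir h _ p hp), pds_eq_fderiv (analytic_dir h _ p hp),
    fderiv_dir (h p hp), fderiv_dir (h p hp)]
  have hs : IsSymmSndFDerivAt ℝ f p :=
    ((h p hp).contDiffAt (n := 2)).isSymmSndFDerivAt (by simp)
  exact hs _ _

theorem pdt_iter_pds_pds {U : Set (ℝ × ℝ)} (hU : IsOpen U) (j : ℕ) {f : ℝ × ℝ → ℝ}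
    (h : AnalyticOnNhd ℝ f U) :
    Set.EqOn (pdt^[j] (pds (pds f))) (pds (pds (pdt^[j] f))) U := by
  induction j generalizing f with
  | zero => exact fun _ _ => rfl
  | succ j ih =>
    have e : Set.EqOn (pdt (pds (pds f))) (pds (pds (pdt f))) U :=
      (pdt_pds_comm hU (pds_analytic hU h)).trans (pds_congr_on hU (pdt_pds_comm hU h))
    exact (pdt_iter_congr_on hU j e).trans (ih (pdt_analytic hU h))

theorem pdt_iter_eq (j : ℕ) (f : ℝ × ℝ → ℝ) (x y : ℝ) :
    (pdt^[j] f) (x, y) = iteratedDeriv j (fun t => f (x, t)) y := by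
  induction j generalizing y with
  | zero => simp
  | succ j ih =>
    rw [Function.iterate_succ_apply', iteratedDeriv_succ]
    unfold pdt
    congr 1
    funext t
    exact ih t

open Filter Topology in
theorem iteratedDeriv_of_hasSum {R : ℝ} (hR : 0 < R) (c : ℕ → ℝ) (f : ℝ → ℝ)
    (h : ∀ y, |y| < R → HasSum (fun j => c j * y ^ j) (f y)) (j : ℕ) :
    iteratedDeriv j f 0 = (j.factorial : ℝ) * c j := by
  have h1 : HasFPowerSeriesAt f (FormalMultilinearSeries.ofScalars ℝ c) 0 := by
    rw [hasFPowerSeriesAt_iff]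
    have : ∀ᶠ z in 𝓝 (0 : ℝ), |z| < R := by
      have := Metric.ball_mem_nhds (0 : ℝ) hR
      filter_upwards [this] with z hz
      simpa using hz
    filter_upwards [this] with z hz
    simpa [FormalMultilinearSeries.coeff_ofScalars, mul_comm] using h z hz
  obtain ⟨r, hr⟩ := h1
  have h2 := hr.factorial_smul 1 j
  rw [iteratedDeriv_eq_iteratedFDeriv]
  rw [← h2]
  simp

theorem iteratedDeriv_pow_mul_zero {v : ℝ → ℝ} (hv : AnalyticAt ℝ v 0) (n k : ℕ) :
    iteratedDeriv (n + k) (fun y => y ^ n * v y) 0 =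
      ((n + k).choose n : ℝ) * (n.factorial : ℝ) * iteratedDeriv k v 0 := by
  have h := iteratedDeriv_mul (n := n + k) (x := (0 : ℝ)) (f := fun y : ℝ => y ^ n) (g := v)
    (by fun_prop) hv.contDiffAt
  have e : ((fun y : ℝ => y ^ n) * v) = fun y => y ^ n * v y := rfl
  rw [e] at h
  rw [h, Finset.sum_eq_single n]
  · rw [iteratedDeriv_fun_pow_zero]; simp
  · intro b _ hb
    rw [iteratedDeriv_fun_pow_zero]; simp [hb]
  · intro hb; simp at hb

open Filter Topology in
theorem DopR_congr (m : ℕ) {f g : ℝ → ℝ} {S : Set ℝ} (hS : IsOpen S) (c : ℝ)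
    (h : ∀ x ∈ S, f x = c * g x) : ∀ x ∈ S, DopR m f x = c * DopR m g x := by
  intro x hx
  have e : f =ᶠ[𝓝 x] fun x => c * g x := by
    filter_upwards [hS.mem_nhds hx] with y hy using h y hy
  have e2 : deriv (fun x => c * g x) = fun x => c * deriv g x := by
    funext y; exact deriv_const_mul_field c
  unfold DopR
  rw [e.deriv.deriv_eq, e2, deriv_const_mul_field, mul_div_assoc]

open Filter Topology in
theorem coeff_recursion (m n : ℕ) (ε R : ℝ) (hR : 0 < R) (w : ℝ × ℝ → ℝ)
    (hw : AnalyticOnNhd ℝ w (Set.Ioo (-R) R ×ˢ Set.Ioo (-R) R))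
    (hsol : ∀ p : ℝ × ℝ, |p.1| < R → |p.2| < R →
      p.1 ^ m * pdt (pdt w) p + ε * p.2 ^ n * pds (pds w) p = 0)
    (α : ℕ → ℝ → ℝ)
    (hexp : ∀ x y : ℝ, |x| < R → |y| < R → HasSum (fun j => α j x * y ^ j) (w (x, y)))
    (k : ℕ) (x : ℝ) (hx0 : x ≠ 0) (hx : |x| < R) :
    α (n + k + 2) x = (-ε) / (((n + k + 1 : ℕ) : ℝ) * ((n + k + 2 : ℕ) : ℝ)) * DopR m (α k) x := by
  set U : Set (ℝ × ℝ) := Set.Ioo (-R) R ×ˢ Set.Ioo (-R) R with hUdef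
  have hU : IsOpen U := isOpen_Ioo.prod isOpen_Ioo
  have hcoef : ∀ j s, |s| < R → (pdt^[j] w) (s, 0) = (j.factorial : ℝ) * α j s := by
    intro j s hs
    rw [pdt_iter_eq]
    exact iteratedDeriv_of_hasSum hR (fun j => α j s) _ (fun y hy => hexp s y hs hy) j
  have hxU : (x, (0 : ℝ)) ∈ U := ⟨abs_lt.1 hx, by simp [hR]⟩
  -- second x-derivative
  have hxx : (pdt^[k] (pds (pds w))) (x, 0) = (k.factorial : ℝ) * deriv (deriv (α k)) x := by
    rw [pdt_iter_pds_pds hU k hw hxU]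
    have e : (fun s => (pdt^[k] w) (s, 0)) =ᶠ[𝓝 x] fun s => (k.factorial : ℝ) * α k s := by
      filter_upwards [isOpen_Ioo.mem_nhds (abs_lt.1 hx : x ∈ Set.Ioo (-R) R)] with s hs
      exact hcoef k s (abs_lt.2 hs)
    have e2 : deriv (fun x => (k.factorial : ℝ) * α k x) =
        fun x => (k.factorial : ℝ) * deriv (α k) x := by
      funext y; exact deriv_const_mul_field _
    change deriv (deriv (fun s => (pdt^[k] w) (s, 0))) x = _
    rw [e.deriv.deriv_eq, e2, deriv_const_mul_field]
  rw [pdt_iter_eq] at hxx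
  have hyy := hcoef (n + k + 2) x hx
  have hyy' : iteratedDeriv (n + k) (fun t => pdt (pdt w) (x, t)) 0 =
      ((n + k + 2).factorial : ℝ) * α (n + k + 2) x := by
    rw [← hyy, ← pdt_iter_eq]; rfl
  have hva : AnalyticAt ℝ (fun t => pds (pds w) (x, t)) 0 := by
    have h1 := pds_analytic hU (pds_analytic hU hw) (x, 0) hxU
    have h2 : AnalyticAt ℝ (fun t : ℝ => (x, t)) 0 := by fun_prop
    exact AnalyticAt.fun_comp h1 h2
  have hL := iteratedDeriv_pow_mul_zero hva n k
  have hpde : (fun t => x ^ m * pdt (pdt w) (x, t)) =ᶠ[𝓝 0]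
      fun t => (-ε) * (t ^ n * pds (pds w) (x, t)) := by
    filter_upwards [isOpen_Ioo.mem_nhds (by simp [hR] : (0 : ℝ) ∈ Set.Ioo (-R) R)] with t ht
    have := hsol (x, t) hx (abs_lt.2 ht)
    simp only at this
    linarith
  have hE := hpde.iteratedDeriv_eq (n + k)
  rw [iteratedDeriv_const_mul_field, iteratedDeriv_const_mul_field, hyy', hL, hxx] at hE
  have hch : ((n + k).choose n : ℝ) * (n.factorial : ℝ) * (k.factorial : ℝ)
      = ((n + k).factorial : ℝ) := by
    have := Nat.add_choose_mul_factorial_mul_factorial n k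
    rw [← Nat.choose_symm_add] at this
    exact_mod_cast this
  have hf : ((n + k + 2).factorial : ℝ) =
      ((n + k + 2 : ℕ) : ℝ) * (((n + k + 1 : ℕ) : ℝ) * ((n + k).factorial : ℝ)) := by
    rw [Nat.factorial_succ, Nat.factorial_succ]; push_cast; ring
  have hfp : ((n + k).factorial : ℝ) ≠ 0 := by positivity
  have h1 : ((n + k + 1 : ℕ) : ℝ) ≠ 0 := by positivity
  have h2 : ((n + k + 2 : ℕ) : ℝ) ≠ 0 := by positivity
  have hxm : x ^ m ≠ 0 := pow_ne_zero _ hx0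
  have hE2 : ((n + k).factorial : ℝ) *
      (x ^ m * (((n + k + 2 : ℕ) : ℝ) * ((n + k + 1 : ℕ) : ℝ)) * α (n + k + 2) x) =
      ((n + k).factorial : ℝ) * ((-ε) * deriv (deriv (α k)) x) := by
    rw [hf] at hE
    linear_combination hE + (-ε) * deriv (deriv (α k)) x * hch
  have hE3 := mul_left_cancel₀ hfp hE2
  unfold DopR
  generalize ((n + k + 1 : ℕ) : ℝ) = a at *
  generalize ((n + k + 2 : ℕ) : ℝ) = b at *
  field_simp
  linear_combination hE3

/-- formula \eqref{Orson}.
For an analytic solution `w = Σ_j α_j(x) y^j` of `x^m w_yy + ε y^n w_xx = 0` on the square,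
`α_{p(n+2)} = ((−ε)^p/A^n_p) D^p α₀` and `α_{p(n+2)+1} = ((−ε)^p/B^n_p) D^p α₁`
for `0 < |x| < R`. -/
theorem coefficient_formula
    (m n : ℕ) (hm : 0 < m) (hn : 0 < n) (ε : ℝ) (hε : ε = 1 ∨ ε = -1)
    (R : ℝ) (hR : 0 < R)
    (w : ℝ × ℝ → ℝ)
    (hw : AnalyticOnNhd ℝ w (Set.Ioo (-R) R ×ˢ Set.Ioo (-R) R))
    (hsol : ∀ p : ℝ × ℝ, |p.1| < R → |p.2| < R →
      p.1 ^ m * pdt (pdt w) p + ε * p.2 ^ n * pds (pds w) p = 0)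
    (α : ℕ → ℝ → ℝ) (hα : ∀ j, AnalyticOnNhd ℝ (α j) (Set.Ioo (-R) R))
    (hexp : ∀ x y : ℝ, |x| < R → |y| < R → HasSum (fun j => α j x * y ^ j) (w (x, y)))
    :
    ∀ p : ℕ, ∀ x : ℝ, x ≠ 0 → |x| < R →
      α (p * (n + 2)) x = (-ε) ^ p / (Acoef n p : ℝ) * (DopR m)^[p] (α 0) x ∧
      α (p * (n + 2) + 1) x = (-ε) ^ p / (Bcoef n p : ℝ) * (DopR m)^[p] (α 1) x := by
  have hrec := coeff_recursion m n ε R hR w hw hsol α hexp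
  set S : Set ℝ := {x | x ≠ 0} ∩ {x | |x| < R} with hSdef
  have hS : IsOpen S := isOpen_ne.inter (isOpen_lt continuous_abs continuous_const)
  have step : ∀ (i k : ℕ) (c : ℝ) (g : ℝ → ℝ), i = n + k + 2 → (∀ x ∈ S, α k x = c * g x) →
      ∀ x ∈ S, α i x =
        ((-ε) / (((n + k + 1 : ℕ) : ℝ) * ((n + k + 2 : ℕ) : ℝ)) * c) * DopR m g x := by
    intro i k c g hi h x hx
    rw [hi, hrec k x hx.1 hx.2, DopR_congr m hS c h x hx, mul_assoc]
  have key : ∀ p : ℕ,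
      (∀ x ∈ S, α (p * (n + 2)) x = (-ε) ^ p / (Acoef n p : ℝ) * (DopR m)^[p] (α 0) x) ∧
      (∀ x ∈ S, α (p * (n + 2) + 1) x = (-ε) ^ p / (Bcoef n p : ℝ) * (DopR m)^[p] (α 1) x) := by
    intro p
    induction p with
    | zero => simp [Acoef, Bcoef]
    | succ p ih =>
      constructor
      · intro x hx
        rw [step _ _ _ _ (by ring) ih.1 x hx, Function.iterate_succ_apply']
        congr 1
        have hA : Acoef n (p + 1) = Acoef n p *
            ((n + p * (n + 2) + 1) * (n + p * (n + 2) + 2)) := by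
          unfold Acoef
          rw [Finset.prod_Icc_succ_top (by omega)]
          have : (p + 1) * (n + 2) = n + p * (n + 2) + 2 := by ring
          rw [this]; rfl
        rw [hA, Nat.cast_mul, Nat.cast_mul, pow_succ, div_mul_div_comm]
        congr 1 <;> ring
      · intro x hx
        rw [step _ _ _ _ (by ring) ih.2 x hx, Function.iterate_succ_apply']
        congr 1
        have hB : Bcoef n (p + 1) = Bcoef n p *
            ((n + (p * (n + 2) + 1) + 1) * (n + (p * (n + 2) + 1) + 2)) := by
          unfold Bcoef
          rw [Finset.prod_Icc_succ_top (by omega)]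
          congr 1
          ring
        rw [hB, Nat.cast_mul, Nat.cast_mul, pow_succ, div_mul_div_comm]
        congr 1 <;> ring
  intro p x hx0 hx
  exact ⟨(key p).1 x ⟨hx0, hx⟩, (key p).2 x ⟨hx0, hx⟩⟩
end
end
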